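/- Let (P_t)_{t≥0} be the transition probabilities of the MSB-process and π(t,1) = (π₁(t,1),π₂(t,1)) the solution of the moment linear system with initial value (1,1). Then for all x, y ∈ 𝕄 and t ≥ 0: (i) every coupling Π of P_t(x,·) and P_t(y,·) satisfies ∫_{𝕄×𝕄}(|u₁−v₁|+|u₂−v₂|) Π(du,dv) ≥ |(x₁−y₁)π₁(t,1) + (x₂−y₂)π₂(t,1)|; and (ii) there exists a coupling Π of P_t(x,·) and P_t(y,·) with ∫_{𝕄×𝕄}(|u₁−v₁|+|u₂−v₂|) Π(du,dv) ≤ |x₁−y₁|π₁(t,1) + |x₂−y₂|π₂(t,1). In particular the L¹-Wasserstein distance W₁(δ_xP_t, δ_yP_t) lies between these two bounds. -/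

import Mathlib

open MeasureTheory Filter Set

noncomputable section

/-- The state space `𝕄 = [0,∞) × ℕ`, as a subset of `ℝ²`. -/
def Mset : Set (ℝ × ℝ) := {z | 0 ≤ z.1 ∧ ∃ n : ℕ, z.2 = (n : ℝ)}

/-- The space `𝕄₋₁ = [0,∞) × (ℕ ∪ {-1})`, as a subset of `ℝ²`. -/
def Mm1set : Set (ℝ × ℝ) := {z | 0 ≤ z.1 ∧ ∃ n : ℤ, (-1 : ℤ) ≤ n ∧ z.2 = (n : ℝ)}

/-- The data of a branching mechanism `(Φ₁, Φ₂)` of a mixed state branching process. -/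
structure BranchingMechanism where
  a11 : ℝ
  a21 : ℝ
  alpha : ℝ
  a21_nonneg : 0 ≤ a21
  alpha_nonneg : 0 ≤ alpha
  n1 : Measure (ℝ × ℝ)
  n2 : Measure (ℝ × ℝ)
  n1_sigmaFinite : SigmaFinite n1
  n2_sigmaFinite : SigmaFinite n2
  /-- `n₁` is supported on `𝕄` -/
  n1_supp : n1 Msetᶜ = 0
  /-- `n₂` is supported on `𝕄₋₁` -/
  n2_supp : n2 Mm1setᶜ = 0
  /-- `n₁` does not charge the origin -/
  n1_zero : n1 {0} = 0
  /-- `n₂` does not charge the origin -/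
  n2_zero : n2 {0} = 0
  /-- `n₂([0,∞) × {-1}) < ∞` -/
  n2_neg1 : n2 {z : ℝ × ℝ | z.2 = -1} ≠ ⊤
  /-- `∫ (z₁ ∧ z₁² + z₂) n₁(dz) < ∞` -/
  n1_moment : ∫⁻ z, ENNReal.ofReal (min z.1 (z.1 ^ 2) + z.2) ∂n1 ≠ ⊤
  /-- `∫ (z₁ + |z₂|) n₂(dz) < ∞` -/
  n2_moment : ∫⁻ z, ENNReal.ofReal (z.1 + |z.2|) ∂n2 ≠ ⊤

/-- `Φ₁(λ) = -a₁₁λ₁ - αλ₁² - ∫ (e^{-⟨λ,z⟩} - 1 + λ₁z₁) n₁(dz)`. -/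
def mPhi1 (B : BranchingMechanism) (l : ℝ × ℝ) : ℝ :=
  -B.a11 * l.1 - B.alpha * l.1 ^ 2 -
    ∫ z, (Real.exp (-(l.1 * z.1 + l.2 * z.2)) - 1 + l.1 * z.1) ∂B.n1

/-- `Φ₂(λ) = a₂₁λ₁ + ∫ (1 - e^{-⟨λ,z⟩}) n₂(dz)`. -/
def mPhi2 (B : BranchingMechanism) (l : ℝ × ℝ) : ℝ :=
  B.a21 * l.1 + ∫ z, (1 - Real.exp (-(l.1 * z.1 + l.2 * z.2))) ∂B.n2


/-- `V : t ↦ V(t,λ)` is a continuous `[0,∞)²`-valued solution of the cumulant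
equations (3.8) with initial value `λ = l`. -/
def SolvesCumulant (B : BranchingMechanism) (l : ℝ × ℝ) (V : ℝ → ℝ × ℝ) : Prop :=
  ContinuousOn V (Ici 0) ∧
  (∀ t : ℝ, 0 ≤ t → 0 ≤ (V t).1 ∧ 0 ≤ (V t).2) ∧
  (∀ t : ℝ, 0 ≤ t →
    (V t).1 = l.1 + ∫ s in (0:ℝ)..t, mPhi1 B (V s) ∧
    (V t).2 = l.2 + ∫ s in (0:ℝ)..t, mPhi2 B (V s))

/-- `P` is the family of transition probabilities of the MSB-process with cumulant
`V`: each `P_t(x,·)` is a Borel probability measure on `𝕄` with Laplace transform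
`∫ e^{-⟨λ,y⟩} P_t(x,dy) = exp(-⟨x,V(t,λ)⟩)`. -/
def IsMSBTransition (V : ℝ → (ℝ × ℝ) → ℝ × ℝ)
    (P : ℝ → (ℝ × ℝ) → Measure (ℝ × ℝ)) : Prop :=
  ∀ t : ℝ, 0 ≤ t → ∀ x ∈ Mset,
    IsProbabilityMeasure (P t x) ∧ P t x Msetᶜ = 0 ∧
    ∀ l : ℝ × ℝ, 0 ≤ l.1 → 0 ≤ l.2 →
      ∫ y, Real.exp (-(l.1 * y.1 + l.2 * y.2)) ∂(P t x)
        = Real.exp (-(x.1 * (V t l).1 + x.2 * (V t l).2))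

/-- `π : t ↦ π(t,λ)` is a `[0,∞)²`-valued solution of the moment linear system
`dπ₁/dt = -a₁₁π₁ + π₂ ∫ z₂ n₁(dz)`,
`dπ₂/dt = a₂₁π₁ + ∫ (z₁π₁ + z₂π₂) n₂(dz)`, with `π(0,λ) = l`. -/
def SolvesMoment (B : BranchingMechanism) (l : ℝ × ℝ) (π : ℝ → ℝ × ℝ) : Prop :=
  π 0 = l ∧
  (∀ t : ℝ, 0 ≤ t → 0 ≤ (π t).1 ∧ 0 ≤ (π t).2) ∧
  (∀ t : ℝ, 0 ≤ t →
    HasDerivWithinAt (fun s => (π s).1)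
      (-B.a11 * (π t).1 + (π t).2 * ∫ z, z.2 ∂B.n1) (Ici 0) t ∧
    HasDerivWithinAt (fun s => (π s).2)
      (B.a21 * (π t).1 + ∫ z, (z.1 * (π t).1 + z.2 * (π t).2) ∂B.n2) (Ici 0) t)

/-- `Pc` is a coupling of the probability measures `μ` and `ν` on `ℝ²`. -/
def IsCoupling (Pc : Measure ((ℝ × ℝ) × (ℝ × ℝ))) (μ ν : Measure (ℝ × ℝ)) : Prop :=
  IsProbabilityMeasure Pc ∧ Pc.map Prod.fst = μ ∧ Pc.map Prod.snd = ν

/-!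
The moment system is the linearization at `0` of the cumulant equation, so
`V(t, θ(1,1)) / θ → π(t,1)` as `θ ↓ 0`; differentiating the Laplace transform of `P_t(x,·)` at `0`
along `(1,1)` then gives `∫ (u₁ + u₂) P_t(x,du) = ⟨x, π(t,1)⟩`. The lower bound is the triangle
inequality. For the upper bound, the branching property `P_t(a + b,·) = P_t(a,·) ∗ P_t(b,·)`, which
follows from uniqueness of Laplace transforms, lets the populations started from `x` and `y` share
the descendants of `x ⊓ y`; only those of `(x - y)⁺` and `(y - x)⁺` contribute to the cost.
-/

open scoped Topology BoundedContinuousFunction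

section LaplaceTransform

variable {E : Type*} [TopologicalSpace E] [PolishSpace E] [MeasurableSpace E] [BorelSpace E]
  {μ ν : Measure E} [IsFiniteMeasure μ] [IsFiniteMeasure ν]

theorem measure_eq_of_forall_mem_submonoid_integral_eq (M : Submonoid (E →ᵇ ℝ))
    (hsep : ((fun f : E →ᵇ ℝ => (f : E → ℝ)) '' M).SeparatesPoints)
    (h : ∀ f ∈ M, ∫ y, f y ∂μ = ∫ y, f y ∂ν) : μ = ν := by
  let A : StarSubalgebra ℝ (E →ᵇ ℝ) :=
    { Algebra.adjoin ℝ (M : Set (E →ᵇ ℝ)) with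
      star_mem' := fun {f} hf => by rwa [show star f = f from by ext; simp] }
  refine ext_of_forall_mem_subalgebra_integral_eq_of_polish (𝕜 := ℝ) (A := A) ?_ ?_
  · intro x y hxy
    obtain ⟨_, ⟨f, hf, rfl⟩, hne⟩ := hsep hxy
    exact ⟨f, ⟨f.toContinuousMap, ⟨f, Algebra.subset_adjoin hf, rfl⟩, rfl⟩, hne⟩
  · intro g hg
    have hspan : g ∈ Submodule.span ℝ (M : Set (E →ᵇ ℝ)) := by
      have hg' : g ∈ Subalgebra.toSubmodule (Algebra.adjoin ℝ (M : Set (E →ᵇ ℝ))) := hg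
      rwa [Algebra.adjoin_eq_span, M.closure_eq] at hg'
    clear hg
    induction hspan using Submodule.span_induction with
    | mem f hf => exact h f hf
    | zero => simp
    | add f₁ f₂ _ _ h₁ h₂ =>
      simp only [BoundedContinuousFunction.coe_add, Pi.add_apply]
      rw [integral_add (f₁.integrable μ) (f₂.integrable μ),
        integral_add (f₁.integrable ν) (f₂.integrable ν), h₁, h₂]
    | smul c f _ hf =>
      simp only [BoundedContinuousFunction.coe_smul, smul_eq_mul, integral_const_mul, hf]

theorem measure_eq_of_forall_mem_addSubmonoid_integral_exp_neg_eq (L : AddSubmonoid (E → ℝ))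
    (hcont : ∀ f ∈ L, Continuous f) (hnonneg : ∀ f ∈ L, 0 ≤ f)
    (hsep : (L : Set (E → ℝ)).SeparatesPoints)
    (h : ∀ f ∈ L, ∫ y, Real.exp (-f y) ∂μ = ∫ y, Real.exp (-f y) ∂ν) : μ = ν := by
  let M : Submonoid (E →ᵇ ℝ) :=
    { carrier := {g | ∃ f ∈ L, ∀ y, g y = Real.exp (-f y)}
      one_mem' := ⟨0, L.zero_mem, by simp⟩
      mul_mem' := by
        rintro g₁ g₂ ⟨f₁, hf₁, hg₁⟩ ⟨f₂, hf₂, hg₂⟩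
        exact ⟨f₁ + f₂, L.add_mem hf₁ hf₂, fun y => by simp [hg₁, hg₂, ← Real.exp_add, add_comm]⟩ }
  refine measure_eq_of_forall_mem_submonoid_integral_eq M ?_ ?_
  · intro x y hxy
    obtain ⟨f, hf, hne⟩ := hsep hxy
    let g : E →ᵇ ℝ := .ofNormedAddCommGroup (fun y => Real.exp (-f y))
      (by have := hcont f hf; fun_prop) 1 fun y => by simpa using hnonneg f hf y
    exact ⟨g, ⟨g, ⟨f, hf, fun _ => rfl⟩, rfl⟩, by simpa [g] using hne⟩
  · rintro g ⟨f, hf, hg⟩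
    simpa only [hg] using h f hf

end LaplaceTransform

/-- The duality pairing `⟨l, z⟩ = l₁ z₁ + l₂ z₂` on `ℝ²`. -/
def pairing (l z : ℝ × ℝ) : ℝ := l.1 * z.1 + l.2 * z.2

@[fun_prop]
theorem continuous_pairing {X : Type*} [TopologicalSpace X] {f g : X → ℝ × ℝ}
    (hf : Continuous f) (hg : Continuous g) : Continuous fun x => pairing (f x) (g x) := by
  unfold pairing; fun_prop

theorem pairing_add_left (l m z : ℝ × ℝ) : pairing (l + m) z = pairing l z + pairing m z := by
  simp only [pairing, Prod.fst_add, Prod.snd_add]; ring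

theorem pairing_add_right (l z w : ℝ × ℝ) : pairing l (z + w) = pairing l z + pairing l w := by
  simp only [pairing, Prod.fst_add, Prod.snd_add]; ring

theorem pairing_smul_left (c : ℝ) (l z : ℝ × ℝ) : pairing (c • l) z = c * pairing l z := by
  simp only [pairing, Prod.smul_fst, Prod.smul_snd, smul_eq_mul]; ring

theorem pairing_smul_right (c : ℝ) (l z : ℝ × ℝ) : pairing l (c • z) = c * pairing l z := by
  simp only [pairing, Prod.smul_fst, Prod.smul_snd, smul_eq_mul]; ring

theorem pairing_nonneg {l z : ℝ × ℝ} (hl : 0 ≤ l) (hz : 0 ≤ z) : 0 ≤ pairing l z :=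
  add_nonneg (mul_nonneg hl.1 hz.1) (mul_nonneg hl.2 hz.2)

theorem measure_eq_of_forall_integral_exp_neg_pairing_eq {μ ν : Measure (ℝ × ℝ)}
    [IsFiniteMeasure μ] [IsFiniteMeasure ν] (hμ : ∀ᵐ y ∂μ, 0 ≤ y) (hν : ∀ᵐ y ∂ν, 0 ≤ y)
    (h : ∀ l, 0 ≤ l → ∫ y, Real.exp (-pairing l y) ∂μ = ∫ y, Real.exp (-pairing l y) ∂ν) :
    μ = ν := by
  have hclosed : IsClosed (Ici (0 : ℝ × ℝ)) := isClosed_Ici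
  have : PolishSpace (Ici (0 : ℝ × ℝ)) := hclosed.polishSpace
  have hμ' := Measure.restrict_eq_self_of_ae_mem (s := Ici 0) hμ
  have hν' := Measure.restrict_eq_self_of_ae_mem (s := Ici 0) hν
  have hm : MeasurableSet (Ici (0 : ℝ × ℝ)) := hclosed.measurableSet
  let L : AddSubmonoid (Ici (0 : ℝ × ℝ) → ℝ) :=
    { carrier := {f | ∃ l, 0 ≤ l ∧ f = fun y : Ici (0 : ℝ × ℝ) => pairing l y}
      zero_mem' := ⟨0, le_rfl, by ext; simp [pairing]⟩
      add_mem' := by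
        rintro _ _ ⟨l, hl, rfl⟩ ⟨m, hm, rfl⟩
        exact ⟨l + m, add_nonneg hl hm, funext fun y => (pairing_add_left l m y).symm⟩ }
  have hcomap : μ.comap ((↑) : Ici (0 : ℝ × ℝ) → ℝ × ℝ) = ν.comap (↑) := by
    refine measure_eq_of_forall_mem_addSubmonoid_integral_exp_neg_eq L ?_ ?_ ?_ ?_
    · rintro _ ⟨l, _, rfl⟩
      fun_prop
    · rintro _ ⟨l, hl, rfl⟩ y
      exact pairing_nonneg hl y.2
    · intro y z hyz
      by_cases h₁ : (y : ℝ × ℝ).1 = (z : ℝ × ℝ).1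
      · refine ⟨_, ⟨(0, 1), by simp [Prod.le_def], rfl⟩, ?_⟩
        simpa [pairing] using fun h₂ => hyz (Subtype.ext (Prod.ext h₁ h₂))
      · exact ⟨_, ⟨(1, 0), by simp [Prod.le_def], rfl⟩, by simpa [pairing]⟩
    · rintro _ ⟨l, hl, rfl⟩
      rw [integral_subtype_comap hm fun y => Real.exp (-pairing l y),
        integral_subtype_comap hm fun y => Real.exp (-pairing l y), hμ', hν', h l hl]
  rw [← hμ', ← hν', ← map_comap_subtype_coe hm μ, ← map_comap_subtype_coe hm ν, hcomap]

theorem pairing_posPart_sub_add (x y p : ℝ × ℝ) :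
    pairing (x - y)⁺ p + pairing (y - x)⁺ p = |x.1 - y.1| * p.1 + |x.2 - y.2| * p.2 := by
  have habs (a b : ℝ) : (a - b)⁺ + (b - a)⁺ = |a - b| := by
    rw [← neg_sub a b, posPart_neg, posPart_add_negPart]
  rw [← pairing_add_left, ← habs, ← habs]
  rfl

theorem tendsto_one_sub_exp_neg_div {q : ℝ → ℝ} {m : ℝ}
    (h : Tendsto (fun θ => q θ / θ) (𝓝[>] 0) (𝓝 m)) :
    Tendsto (fun θ => (1 - Real.exp (-q θ)) / θ) (𝓝[>] 0) (𝓝 m) := by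
  have hθ : Tendsto (fun θ : ℝ => θ) (𝓝[>] 0) (𝓝 0) := tendsto_nhdsWithin_of_tendsto_nhds tendsto_id
  have hq : Tendsto q (𝓝[>] 0) (𝓝 0) := by
    refine (mul_zero m ▸ h.mul hθ).congr' ?_
    filter_upwards [self_mem_nhdsWithin] with θ hθ using div_mul_cancel₀ _ (ne_of_gt hθ)
  have hexp : Tendsto (fun θ => Real.exp (-q θ)) (𝓝[>] 0) (𝓝 1) :=
    (Real.continuous_exp.tendsto' (-0) 1 (by simp)).comp hq.neg
  refine tendsto_of_tendsto_of_tendsto_of_le_of_le' (mul_one m ▸ h.mul hexp) h ?_ ?_ <;>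
    filter_upwards [self_mem_nhdsWithin] with θ hθ
  · have : q θ * Real.exp (-q θ) ≤ 1 - Real.exp (-q θ) := by
      have hmul : Real.exp (q θ) * Real.exp (-q θ) = 1 := by rw [← Real.exp_add]; simp
      nlinarith [Real.add_one_le_exp (q θ), Real.exp_pos (-q θ)]
    rw [div_mul_eq_mul_div]
    gcongr
    exact le_of_lt hθ
  · gcongr
    · exact le_of_lt hθ
    · linarith [Real.add_one_le_exp (-q θ)]

section Moment

variable {Ω : Type*} [MeasurableSpace Ω] {μ : Measure Ω} [IsProbabilityMeasure μ] {X : Ω → ℝ}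

theorem lintegral_ofReal_one_sub_exp_neg_div (hX : Measurable X) (hX₀ : 0 ≤ᵐ[μ] X) {θ : ℝ}
    (hθ : 0 < θ) :
    ∫⁻ ω, ENNReal.ofReal ((1 - Real.exp (-(θ * X ω))) / θ) ∂μ =
      ENNReal.ofReal ((1 - ∫ ω, Real.exp (-(θ * X ω)) ∂μ) / θ) := by
  have hle : ∀ᵐ ω ∂μ, Real.exp (-(θ * X ω)) ≤ 1 := by
    filter_upwards [hX₀] with ω hω
    simpa using mul_nonneg hθ.le hω
  have hint : Integrable (fun ω => Real.exp (-(θ * X ω))) μ :=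
    .of_bound (by fun_prop) 1 (by simpa [abs_of_pos (Real.exp_pos _)] using hle)
  have hint' : Integrable (fun ω => (1 - Real.exp (-(θ * X ω))) / θ) μ :=
    ((integrable_const 1).sub hint).div_const θ
  rw [← ofReal_integral_eq_lintegral_ofReal hint', integral_div,
    integral_sub (integrable_const 1) hint]
  · simp
  · filter_upwards [hle] with ω hω using div_nonneg (sub_nonneg.2 hω) hθ.le

theorem lintegral_ofReal_eq_of_tendsto_laplace (hX : Measurable X) (hX₀ : 0 ≤ᵐ[μ] X) {m : ℝ}
    (h : Tendsto (fun θ => (1 - ∫ ω, Real.exp (-(θ * X ω)) ∂μ) / θ) (𝓝[>] 0) (𝓝 m)) :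
    ∫⁻ ω, ENNReal.ofReal (X ω) ∂μ = ENNReal.ofReal m := by
  have hlim (ω : Ω) :
      Tendsto (fun θ => (1 - Real.exp (-(θ * X ω))) / θ) (𝓝[>] 0) (𝓝 (X ω)) := by
    refine tendsto_one_sub_exp_neg_div (tendsto_const_nhds.congr' ?_)
    filter_upwards [self_mem_nhdsWithin] with θ hθ
    rw [mul_div_cancel_left₀ _ (ne_of_gt hθ)]
  have hm : Tendsto (fun θ => ∫⁻ ω, ENNReal.ofReal ((1 - Real.exp (-(θ * X ω))) / θ) ∂μ)
      (𝓝[>] 0) (𝓝 (ENNReal.ofReal m)) :=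
    ((ENNReal.continuous_ofReal.tendsto m).comp h).congr' <| by
      filter_upwards [self_mem_nhdsWithin] with θ hθ
      exact (lintegral_ofReal_one_sub_exp_neg_div hX hX₀ hθ).symm
  apply le_antisymm
  · calc ∫⁻ ω, ENNReal.ofReal (X ω) ∂μ
        = ∫⁻ ω, liminf (fun θ => ENNReal.ofReal ((1 - Real.exp (-(θ * X ω))) / θ)) (𝓝[>] 0) ∂μ :=
          lintegral_congr fun ω =>
            ((ENNReal.continuous_ofReal.tendsto _).comp (hlim ω)).liminf_eq.symm
      _ ≤ liminf (fun θ => ∫⁻ ω, ENNReal.ofReal ((1 - Real.exp (-(θ * X ω))) / θ) ∂μ) (𝓝[>] 0) :=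
          lintegral_liminf_le fun θ => by fun_prop
      _ = ENNReal.ofReal m := hm.liminf_eq
  · refine le_of_tendsto hm ?_
    filter_upwards [self_mem_nhdsWithin] with θ (hθ : 0 < θ)
    refine lintegral_mono fun ω => ENNReal.ofReal_le_ofReal ?_
    rw [div_le_iff₀ hθ]
    linarith [Real.add_one_le_exp (-(θ * X ω))]

end Moment

section Linearization

variable {E : Type*} [NormedAddCommGroup E] [NormedSpace ℝ E] {F : E → E} {A : E →L[ℝ] E}
  {S : Set E} {T : ℝ} {π : ℝ → E}

theorem norm_sub_clm_lt_of_norm_sub_eq {x y : E} {ε b : ℝ} (hε : 0 ≤ ε) (hε₁ : ε ≤ 1)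
    (hF : ‖F x - A x‖ ≤ ε * ‖x‖) (hxy : ‖x - y‖ = b) (hy : ε * ‖y‖ < b) :
    ‖F x - A y‖ < (‖A‖ + 2) * b := by
  have hb : 0 ≤ b := hxy ▸ norm_nonneg _
  have hx : ‖x‖ ≤ b + ‖y‖ := by
    simpa [hxy] using norm_add_le (x - y) y
  calc ‖F x - A y‖ = ‖(F x - A x) + A (x - y)‖ := by simp [map_sub]
    _ ≤ ε * ‖x‖ + ‖A‖ * b := norm_add_le_of_le hF (hxy ▸ A.le_opNorm _)
    _ ≤ ε * (b + ‖y‖) + ‖A‖ * b := by gcongr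
    _ < (‖A‖ + 2) * b := by nlinarith

theorem norm_sub_smul_le_of_norm_sub_clm_le {δ ε M θ : ℝ} (hε : 0 < ε) (hε₁ : ε ≤ 1) (hθ : 0 < θ)
    (hT : 0 ≤ T) (hF : ∀ x ∈ S, ‖x‖ ≤ δ → ‖F x - A x‖ ≤ ε * ‖x‖)
    (hM : ∀ s ∈ Icc 0 T, ‖π s‖ ≤ M)
    (hδ : θ * ((M + 1) * Real.exp ((‖A‖ + 2) * T) + M) ≤ δ)
    (hπ : ContinuousOn π (Icc 0 T))
    (hπ' : ∀ s ∈ Ico 0 T, HasDerivWithinAt π (A (π s)) (Ici s) s)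
    {v : ℝ → E} (hv₀ : v 0 = θ • π 0) (hv : ContinuousOn v (Icc 0 T))
    (hvS : ∀ s ∈ Ico 0 T, v s ∈ S)
    (hv' : ∀ s ∈ Ico 0 T, HasDerivWithinAt v (F (v s)) (Ici s) s) :
    ‖v T - θ • π T‖ ≤ ε * θ * (M + 1) * Real.exp ((‖A‖ + 2) * T) := by
  have hM₀ : 0 ≤ M := (norm_nonneg _).trans (hM 0 ⟨le_rfl, hT⟩)
  set K := ‖A‖ + 2
  have hB (s : ℝ) : HasDerivAt (fun s => ε * θ * (M + 1) * Real.exp (K * s))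
      (K * (ε * θ * (M + 1) * Real.exp (K * s))) s :=
    ((((hasDerivAt_id' s).const_mul K).exp).const_mul _).congr_deriv (by ring)
  refine image_norm_le_of_norm_deriv_right_lt_deriv_boundary (f := fun s => v s - θ • π s)
    (hv.sub (hπ.const_smul θ)) (fun s hs => (hv' s hs).sub ((hπ' s hs).const_smul θ)) ?_ hB ?_
    ⟨hT, le_rfl⟩
  · simp only [hv₀, sub_self, norm_zero]
    positivity
  -- Where the deviation first meets the barrier, `v` is still in the `δ`-ball on which `F` is
  -- `ε`-close to `A`, so the deviation grows strictly more slowly than the barrier.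
  intro s hs hcontact
  set B := ε * θ * (M + 1) * Real.exp (K * s) with hBdef
  have hK₀ : 0 ≤ K := by positivity
  have hθM : ‖θ • π s‖ ≤ θ * M := by
    rw [norm_smul, Real.norm_of_nonneg hθ.le]
    exact mul_le_mul_of_nonneg_left (hM s ⟨hs.1, hs.2.le⟩) hθ.le
  have hBδ : B + θ * M ≤ δ := by
    have : B ≤ 1 * θ * (M + 1) * Real.exp (K * T) := by
      rw [hBdef]; gcongr; exact hs.2.le
    linarith
  have hvδ : ‖v s‖ ≤ δ := by
    calc ‖v s‖ = ‖(v s - θ • π s) + θ • π s‖ := by rw [sub_add_cancel]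
      _ ≤ δ := (norm_add_le_of_le hcontact.le hθM).trans hBδ
  have hBgt : ε * ‖θ • π s‖ < B := by
    have : ε * θ * (M + 1) * 1 ≤ B := by
      rw [hBdef]; gcongr; exact Real.one_le_exp (mul_nonneg hK₀ hs.1)
    nlinarith [mul_pos hε hθ]
  rw [← map_smul]
  exact norm_sub_clm_lt_of_norm_sub_eq hε.le hε₁ (hF _ (hvS s hs) hvδ) hcontact hBgt

theorem tendsto_inv_smul_of_hasFDerivWithinAt_zero (hF : HasFDerivWithinAt F A S 0) (hF₀ : F 0 = 0)
    (hT : 0 ≤ T) (hπ : ContinuousOn π (Icc 0 T))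
    (hπ' : ∀ s ∈ Ico 0 T, HasDerivWithinAt π (A (π s)) (Ici s) s)
    {v : ℝ → ℝ → E} (hv₀ : ∀ θ > 0, v θ 0 = θ • π 0) (hv : ∀ θ > 0, ContinuousOn (v θ) (Icc 0 T))
    (hvS : ∀ θ > 0, ∀ s ∈ Ico 0 T, v θ s ∈ S)
    (hv' : ∀ θ > 0, ∀ s ∈ Ico 0 T, HasDerivWithinAt (v θ) (F (v θ s)) (Ici s) s) :
    Tendsto (fun θ => θ⁻¹ • v θ T) (𝓝[>] 0) (𝓝 (π T)) := by
  obtain ⟨M, hM⟩ := isCompact_Icc.exists_bound_of_continuousOn hπ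
  have hM₀ : 0 ≤ M := (norm_nonneg _).trans (hM 0 ⟨le_rfl, hT⟩)
  set C := (M + 1) * Real.exp ((‖A‖ + 2) * T) with hC
  have hC₀ : 0 < C := by positivity
  rw [Metric.tendsto_nhds]
  intro η hη
  let ε := min 1 (η / (2 * C))
  have hε : 0 < ε := by positivity
  have hεC : ε * C < η := by
    calc ε * C ≤ η / (2 * C) * C := by gcongr; exact min_le_right _ _
      _ = η / 2 := by field_simp
      _ < η := half_lt_self hη
  obtain ⟨δ, hδ, hFδ⟩ : ∃ δ > 0, ∀ x ∈ S, ‖x‖ ≤ δ → ‖F x - A x‖ ≤ ε * ‖x‖ := by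
    have := hF.isLittleO.def hε
    rw [eventually_nhdsWithin_iff, Metric.nhds_basis_closedBall.eventually_iff] at this
    obtain ⟨δ, hδ, hx⟩ := this
    exact ⟨δ, hδ, fun x hxS hxδ => by
      simpa [hF₀] using hx (mem_closedBall_zero_iff.2 hxδ) hxS⟩
  have hsmall : ∀ᶠ θ : ℝ in 𝓝[>] 0, θ * (C + M) < δ :=
    nhdsWithin_le_nhds <|
      ((continuous_mul_const (C + M)).tendsto' 0 0 (zero_mul _)).eventually_lt_const hδ
  filter_upwards [self_mem_nhdsWithin, hsmall] with θ (hθ : 0 < θ) hθδ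
  have hbound := norm_sub_smul_le_of_norm_sub_clm_le hε (min_le_left _ _) hθ hT hFδ hM hθδ.le hπ hπ'
    (hv₀ θ hθ) (hv θ hθ) (hvS θ hθ) (hv' θ hθ)
  calc dist (θ⁻¹ • v θ T) (π T) = θ⁻¹ * ‖v θ T - θ • π T‖ := by
        rw [dist_eq_norm, ← norm_smul_of_nonneg (inv_nonneg.2 hθ.le), smul_sub,
          inv_smul_smul₀ hθ.ne']
    _ ≤ θ⁻¹ * (ε * θ * (M + 1) * Real.exp ((‖A‖ + 2) * T)) := by gcongr
    _ = ε * C := by rw [hC]; field_simp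
    _ < η := hεC

theorem hasDerivWithinAt_Ici_of_eq_add_integral [CompleteSpace E] {u v : ℝ → E} {c : E}
    (hu : ContinuousOn u (Ici 0)) (hv : ∀ t, 0 ≤ t → v t = c + ∫ s in (0 : ℝ)..t, u s) {t : ℝ}
    (ht : 0 ≤ t) : HasDerivWithinAt v (u t) (Ici t) t := by
  have hint : IntervalIntegrable u volume 0 t :=
    (hu.mono (by rw [uIcc_of_le ht]; exact Icc_subset_Ici_self)).intervalIntegrable
  have hmeas : StronglyMeasurableAtFilter u (𝓝[>] t) :=
    (hu.mono (Ioi_subset_Ici ht)).stronglyMeasurableAtFilter_nhdsWithin measurableSet_Ioi t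
  have hcont : ContinuousWithinAt u (Ioi t) t := (hu t ht).mono (Ioi_subset_Ici ht)
  refine ((intervalIntegral.integral_hasDerivWithinAt_right hint hmeas hcont).const_add c).congr
    (fun s hs => hv s (ht.trans hs)) (hv t ht)

end Linearization

/-- The `ℓ¹` norm `|z₁| + |z₂|` on `ℝ²`, whose associated distance is the cost of the couplings. -/
def l1Norm : AddGroupSeminorm (ℝ × ℝ) where
  toFun z := |z.1| + |z.2|
  map_zero' := by simp
  add_le' z w := by
    rw [add_add_add_comm]
    exact add_le_add (abs_add_le _ _) (abs_add_le _ _)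
  neg' z := by simp

theorem l1Norm_apply (z : ℝ × ℝ) : l1Norm z = |z.1| + |z.2| := rfl

@[fun_prop]
theorem continuous_l1Norm : Continuous l1Norm := by
  simp only [funext l1Norm_apply]; fun_prop

theorem abs_pairing_le (l z : ℝ × ℝ) : |pairing l z| ≤ ‖l‖ * l1Norm z := by
  calc |pairing l z| ≤ |l.1 * z.1| + |l.2 * z.2| := abs_add_le _ _
    _ = ‖l.1‖ * |z.1| + ‖l.2‖ * |z.2| := by simp only [abs_mul, Real.norm_eq_abs]
    _ ≤ ‖l‖ * |z.1| + ‖l‖ * |z.2| := by gcongr; exacts [norm_fst_le l, norm_snd_le l]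
    _ = ‖l‖ * l1Norm z := (mul_add _ _ _).symm

section ExponentialRemainder

/-- The Taylor remainder `e⁻ᵃ - 1 + a` of `a ↦ e⁻ᵃ`: the nonlinear part of a branching mechanism. -/
def expRemainder (a : ℝ) : ℝ := Real.exp (-a) - 1 + a

@[fun_prop]
theorem continuous_expRemainder : Continuous expRemainder := by
  unfold expRemainder; fun_prop

@[simp]
theorem expRemainder_zero : expRemainder 0 = 0 := by simp [expRemainder]

theorem expRemainder_nonneg (a : ℝ) : 0 ≤ expRemainder a := by
  linarith [Real.add_one_le_exp (-a), show expRemainder a = Real.exp (-a) - 1 + a from rfl]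

theorem expRemainder_le_mul_one_sub_exp (a : ℝ) : expRemainder a ≤ a * (1 - Real.exp (-a)) := by
  have hmul : Real.exp a * Real.exp (-a) = 1 := by rw [← Real.exp_add]; simp
  unfold expRemainder
  nlinarith [Real.add_one_le_exp a, Real.exp_pos (-a)]

theorem abs_one_sub_exp_neg_le {a M : ℝ} (hM : 0 ≤ M) (ha : -M ≤ a) :
    |1 - Real.exp (-a)| ≤ Real.exp M * min 1 |a| := by
  have hexp : Real.exp (-a) ≤ Real.exp M := Real.exp_le_exp.2 (by linarith)
  have hlin : 1 - a ≤ Real.exp (-a) := by linarith [Real.add_one_le_exp (-a)]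
  have hM₁ : 1 ≤ Real.exp M := Real.one_le_exp hM
  rcases le_total 0 a with h | h
  · have h₁ : Real.exp (-a) ≤ 1 := Real.exp_le_one_iff.2 (by linarith)
    rw [abs_of_nonneg (sub_nonneg.2 h₁), abs_of_nonneg h]
    calc 1 - Real.exp (-a) ≤ 1 * min 1 a := by
          rw [one_mul]; exact le_min (by linarith [Real.exp_pos (-a)]) (by linarith)
      _ ≤ Real.exp M * min 1 a := by gcongr
  · have h₁ : 1 ≤ Real.exp (-a) := Real.one_le_exp (by linarith)
    have hmul : Real.exp a * Real.exp (-a) = 1 := by rw [← Real.exp_add]; simp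
    have hconv : Real.exp (-a) - 1 ≤ Real.exp (-a) * (-a) := by
      nlinarith [Real.add_one_le_exp a, Real.exp_pos (-a)]
    rw [abs_of_nonpos (sub_nonpos.2 h₁), abs_of_nonpos h, mul_min_of_nonneg _ _ (by positivity)]
    refine le_min (by linarith) ?_
    nlinarith

theorem expRemainder_le {a M : ℝ} (hM : 0 ≤ M) (ha : -M ≤ a) :
    expRemainder a ≤ Real.exp M * min |a| (|a| ^ 2) := by
  calc expRemainder a ≤ |a| * |1 - Real.exp (-a)| := by
        rw [← abs_mul]; exact (expRemainder_le_mul_one_sub_exp a).trans (le_abs_self _)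
    _ ≤ |a| * (Real.exp M * min 1 |a|) := by gcongr; exact abs_one_sub_exp_neg_le hM ha
    _ = Real.exp M * min |a| (|a| ^ 2) := by
        rw [mul_left_comm, mul_min_of_nonneg _ _ (abs_nonneg a), mul_one, sq]

theorem expRemainder_pairing_le {l z : ℝ × ℝ} (hl : 0 ≤ l) (hz : (0, -1) ≤ z) :
    expRemainder (pairing l z) ≤
      ‖l‖ * (Real.exp ‖l‖ * min (l1Norm z) (‖l‖ * l1Norm z ^ 2)) := by
  have hlow : -‖l‖ ≤ pairing l z := by
    have h₁ : 0 ≤ l.1 * z.1 := mul_nonneg hl.1 hz.1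
    have h₂ : l.2 * (-1) ≤ l.2 * z.2 := mul_le_mul_of_nonneg_left hz.2 hl.2
    have h₃ : l.2 ≤ ‖l‖ := (le_abs_self _).trans (norm_snd_le l)
    unfold pairing
    linarith
  calc expRemainder (pairing l z)
      ≤ Real.exp ‖l‖ * min |pairing l z| (|pairing l z| ^ 2) :=
        expRemainder_le (norm_nonneg l) hlow
    _ ≤ Real.exp ‖l‖ * min (‖l‖ * l1Norm z) ((‖l‖ * l1Norm z) ^ 2) := by
        gcongr <;> exact abs_pairing_le l z
    _ = ‖l‖ * (Real.exp ‖l‖ * min (l1Norm z) (‖l‖ * l1Norm z ^ 2)) := by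
        rw [mul_left_comm, mul_min_of_nonneg _ _ (norm_nonneg l)]
        ring_nf

end ExponentialRemainder

/-- The weight `b ∧ b²` controlling the jump measures in the moment conditions. -/
def minSq (b : ℝ) : ℝ := min b (b ^ 2)

@[fun_prop]
theorem continuous_minSq : Continuous minSq := by unfold minSq; fun_prop

theorem minSq_nonneg {b : ℝ} (hb : 0 ≤ b) : 0 ≤ minSq b := le_min hb (sq_nonneg b)

theorem minSq_le_self (b : ℝ) : minSq b ≤ b := min_le_left _ _

theorem min_mul_sq_le_mul_minSq {b c : ℝ} (hb : 0 ≤ b) (hc : 0 ≤ c) :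
    min b (c * b ^ 2) ≤ (1 + c) * minSq b := by
  rw [minSq, mul_min_of_nonneg _ _ (by positivity)]
  refine le_min ((min_le_left _ _).trans ?_) ((min_le_right _ _).trans ?_)
  · exact le_mul_of_one_le_left hb (by linarith)
  · gcongr; linarith

section RemainderIntegral

/-- The contribution `∫ (e^{-⟨l,z⟩} - 1 + ⟨l,z⟩) n(dz)` of a jump measure `n` to the nonlinear part
of a branching mechanism. -/
def remainderIntegral (n : Measure (ℝ × ℝ)) (l : ℝ × ℝ) : ℝ := ∫ z, expRemainder (pairing l z) ∂n

variable {n : Measure (ℝ × ℝ)} (hn : ∀ᵐ z ∂n, (0, -1) ≤ z)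
  (hint : Integrable (fun z => minSq (l1Norm z)) n)

include hn in
theorem ae_norm_expRemainder_pairing_le {l : ℝ × ℝ} (hl : 0 ≤ l) {M : ℝ} (hM : ‖l‖ ≤ M) :
    ∀ᵐ z ∂n, ‖expRemainder (pairing l z)‖ ≤ M * Real.exp M * (1 + M) * minSq (l1Norm z) := by
  filter_upwards [hn] with z hz
  have hM₀ : 0 ≤ M := (norm_nonneg l).trans hM
  rw [Real.norm_of_nonneg (expRemainder_nonneg _)]
  calc expRemainder (pairing l z)
      ≤ ‖l‖ * (Real.exp ‖l‖ * min (l1Norm z) (‖l‖ * l1Norm z ^ 2)) := expRemainder_pairing_le hl hz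
    _ ≤ ‖l‖ * (Real.exp ‖l‖ * ((1 + ‖l‖) * minSq (l1Norm z))) := by
        gcongr; exact min_mul_sq_le_mul_minSq (apply_nonneg l1Norm z) (norm_nonneg l)
    _ ≤ M * (Real.exp M * ((1 + M) * minSq (l1Norm z))) := by
        have := minSq_nonneg (apply_nonneg l1Norm z)
        gcongr
    _ = M * Real.exp M * (1 + M) * minSq (l1Norm z) := by ring

include hn hint

theorem integrable_expRemainder_pairing {l : ℝ × ℝ} (hl : 0 ≤ l) :
    Integrable (fun z => expRemainder (pairing l z)) n :=
  (hint.const_mul _).mono' (by fun_prop) (ae_norm_expRemainder_pairing_le hn hl le_rfl)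

theorem continuousOn_remainderIntegral : ContinuousOn (remainderIntegral n) (Ici 0) := by
  intro l₀ _
  refine continuousWithinAt_of_dominated (.of_forall fun l => by fun_prop) ?_
    (hint.const_mul ((‖l₀‖ + 1) * Real.exp (‖l₀‖ + 1) * (1 + (‖l₀‖ + 1))))
    (.of_forall fun z => by fun_prop)
  have hnorm : ∀ᶠ l in 𝓝[Ici 0] l₀, ‖l‖ < ‖l₀‖ + 1 :=
    nhdsWithin_le_nhds <| continuous_norm.continuousAt.eventually_lt_const (lt_add_one _)
  filter_upwards [self_mem_nhdsWithin, hnorm] with l hl hlM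
  exact ae_norm_expRemainder_pairing_le hn hl hlM.le

omit hn in
theorem tendsto_integral_min_mul_sq_l1Norm :
    Tendsto (fun l : ℝ × ℝ => ∫ z, min (l1Norm z) (‖l‖ * l1Norm z ^ 2) ∂n) (𝓝 0) (𝓝 0) := by
  rw [← integral_zero (ℝ × ℝ) ℝ (μ := n)]
  refine tendsto_integral_filter_of_dominated_convergence (fun z => (1 + 1) * minSq (l1Norm z))
    (.of_forall fun l => by fun_prop) ?_ (hint.const_mul _) (.of_forall fun z => ?_)
  · filter_upwards [Metric.closedBall_mem_nhds (0 : ℝ × ℝ) one_pos] with l hl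
    filter_upwards with z
    have hz := apply_nonneg l1Norm z
    rw [Real.norm_of_nonneg (by positivity)]
    refine (min_mul_sq_le_mul_minSq hz (norm_nonneg l)).trans ?_
    have := minSq_nonneg hz
    gcongr
    exact mem_closedBall_zero_iff.1 hl
  · refine Continuous.tendsto' (by fun_prop) _ _ ?_
    simp [apply_nonneg l1Norm z]

theorem norm_remainderIntegral_le {l : ℝ × ℝ} (hl : 0 ≤ l) :
    ‖remainderIntegral n l‖ ≤
      ‖l‖ * (Real.exp ‖l‖ * ∫ z, min (l1Norm z) (‖l‖ * l1Norm z ^ 2) ∂n) := by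
  have hmin : Integrable (fun z => min (l1Norm z) (‖l‖ * l1Norm z ^ 2)) n := by
    refine (hint.const_mul (1 + ‖l‖)).mono' (by fun_prop) (.of_forall fun z => ?_)
    have hz := apply_nonneg l1Norm z
    rw [Real.norm_of_nonneg (by positivity)]
    exact min_mul_sq_le_mul_minSq hz (norm_nonneg l)
  unfold remainderIntegral
  rw [Real.norm_of_nonneg (integral_nonneg fun z => expRemainder_nonneg _), ← integral_const_mul,
    ← integral_const_mul]
  refine integral_mono_ae (integrable_expRemainder_pairing hn hint hl)
    ((hmin.const_mul _).const_mul _) ?_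
  filter_upwards [hn] with z hz using expRemainder_pairing_le hl hz

theorem hasFDerivWithinAt_remainderIntegral_zero :
    HasFDerivWithinAt (remainderIntegral n) (0 : ℝ × ℝ →L[ℝ] ℝ) (Ici 0) 0 := by
  have hzero : remainderIntegral n 0 = 0 := by simp [remainderIntegral, pairing]
  rw [hasFDerivWithinAt_iff_isLittleO]
  simp only [hzero, sub_zero, zero_apply]
  have hbound : ∀ᶠ l : ℝ × ℝ in 𝓝[Ici 0] 0, ‖remainderIntegral n l‖ ≤
      ‖‖l‖ * (Real.exp ‖l‖ * ∫ z, min (l1Norm z) (‖l‖ * l1Norm z ^ 2) ∂n)‖ := by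
    filter_upwards [self_mem_nhdsWithin] with l hl
    exact (norm_remainderIntegral_le hn hint hl).trans (le_abs_self _)
  have hsmall : Tendsto (fun l : ℝ × ℝ => Real.exp ‖l‖ *
      ∫ z, min (l1Norm z) (‖l‖ * l1Norm z ^ 2) ∂n) (𝓝[Ici 0] 0) (𝓝 0) := by
    have hexp : Tendsto (fun l : ℝ × ℝ => Real.exp ‖l‖) (𝓝 0) (𝓝 1) :=
      Continuous.tendsto' (by fun_prop) _ _ (by simp)
    simpa using (hexp.mul (tendsto_integral_min_mul_sq_l1Norm hint)).mono_left nhdsWithin_le_nhds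
  refine (Asymptotics.IsBigO.of_bound' hbound).trans_isLittleO (.of_norm_right ?_)
  simpa using (Asymptotics.isBigO_refl (fun l : ℝ × ℝ => ‖l‖) _).mul_isLittleO
    ((Asymptotics.isLittleO_one_iff ℝ).2 hsmall)

end RemainderIntegral

namespace BranchingMechanism

variable (B : BranchingMechanism)

theorem ae_n1_mem_Mset : ∀ᵐ z ∂B.n1, z ∈ Mset := B.n1_supp

theorem ae_n1_ge : ∀ᵐ z ∂B.n1, (0, -1) ≤ z := by
  filter_upwards [B.ae_n1_mem_Mset] with z ⟨hz₁, k, hz₂⟩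
  exact ⟨hz₁, by linarith [k.cast_nonneg (α := ℝ)]⟩

theorem ae_n2_ge : ∀ᵐ z ∂B.n2, (0, -1) ≤ z := by
  filter_upwards [show ∀ᵐ z ∂B.n2, z ∈ Mm1set from B.n2_supp] with z ⟨hz₁, k, hk, hz₂⟩
  have hk' : ((-1 : ℤ) : ℝ) ≤ k := Int.cast_le.2 hk
  exact ⟨hz₁, by simpa [hz₂] using hk'⟩

theorem integrable_min_fst_sq_add_snd :
    Integrable (fun z : ℝ × ℝ => min z.1 (z.1 ^ 2) + z.2) B.n1 := by
  refine (lintegral_ofReal_ne_top_iff_integrable (by fun_prop) ?_).1 B.n1_moment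
  filter_upwards [B.ae_n1_mem_Mset] with z ⟨hz₁, k, hz₂⟩
  simp only [Pi.zero_apply, hz₂]
  positivity

theorem integrable_snd_n1 : Integrable (fun z : ℝ × ℝ => z.2) B.n1 := by
  refine B.integrable_min_fst_sq_add_snd.mono' (by fun_prop) ?_
  filter_upwards [B.ae_n1_mem_Mset] with z ⟨hz₁, k, hz₂⟩
  rw [Real.norm_of_nonneg (hz₂ ▸ k.cast_nonneg)]
  exact le_add_of_nonneg_left (by positivity)

theorem integrable_minSq_l1Norm_n1 : Integrable (fun z => minSq (l1Norm z)) B.n1 := by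
  refine (B.integrable_min_fst_sq_add_snd.const_mul 2).mono' (by fun_prop) ?_
  filter_upwards [B.ae_n1_mem_Mset] with z ⟨hz₁, k, hz₂⟩
  rw [Real.norm_of_nonneg (minSq_nonneg (apply_nonneg l1Norm z)), l1Norm_apply,
    abs_of_nonneg hz₁, hz₂, Nat.abs_cast]
  rcases k.eq_zero_or_pos with rfl | hk
  · have : 0 ≤ min z.1 (z.1 ^ 2) := by positivity
    simp only [minSq, Nat.cast_zero, add_zero]
    linarith
  · have hk₁ : (1 : ℝ) ≤ k := by exact_mod_cast hk
    have hfst : z.1 ≤ min z.1 (z.1 ^ 2) + k := by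
      rcases le_total z.1 1 with h | h
      · exact (h.trans hk₁).trans (le_add_of_nonneg_left (by positivity))
      · rw [min_eq_left (le_self_pow₀ h two_ne_zero)]; linarith
    linarith [minSq_le_self (z.1 + k), show 0 ≤ min z.1 (z.1 ^ 2) by positivity]

theorem integrable_l1Norm_n2 : Integrable l1Norm B.n2 := by
  refine (lintegral_ofReal_ne_top_iff_integrable (by fun_prop)
    (.of_forall fun z => apply_nonneg l1Norm z)).1 (ne_of_eq_of_ne ?_ B.n2_moment)
  refine lintegral_congr_ae ?_
  filter_upwards [B.ae_n2_ge] with z hz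
  rw [l1Norm_apply, abs_of_nonneg hz.1]

theorem integrable_fst_n2 : Integrable (fun z : ℝ × ℝ => z.1) B.n2 :=
  B.integrable_l1Norm_n2.mono' (by fun_prop) (.of_forall fun z =>
    le_add_of_nonneg_right (abs_nonneg z.2))

theorem integrable_snd_n2 : Integrable (fun z : ℝ × ℝ => z.2) B.n2 :=
  B.integrable_l1Norm_n2.mono' (by fun_prop) (.of_forall fun z =>
    le_add_of_nonneg_left (abs_nonneg z.1))

theorem integrable_minSq_l1Norm_n2 : Integrable (fun z => minSq (l1Norm z)) B.n2 :=
  B.integrable_l1Norm_n2.mono' (by fun_prop) (.of_forall fun z => by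
    rw [Real.norm_of_nonneg (minSq_nonneg (apply_nonneg l1Norm z))]
    exact minSq_le_self _)

/-- The branching mechanism `Φ = (Φ₁, Φ₂)` as a vector field, so that the cumulant equation reads
`V' = Φ(V)`. -/
def phi (l : ℝ × ℝ) : ℝ × ℝ := (mPhi1 B l, mPhi2 B l)

/-- The linear vector field of the moment system, which is the derivative of `Φ` at `0`. -/
def meanMap : ℝ × ℝ →L[ℝ] ℝ × ℝ :=
  let fst := ContinuousLinearMap.fst ℝ ℝ ℝ
  let snd := ContinuousLinearMap.snd ℝ ℝ ℝ
  (-B.a11 • fst + (∫ z, z.2 ∂B.n1) • snd).prod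
    ((B.a21 + ∫ z, z.1 ∂B.n2) • fst + (∫ z, z.2 ∂B.n2) • snd)

theorem meanMap_apply (l : ℝ × ℝ) : B.meanMap l =
    (-B.a11 * l.1 + (∫ z, z.2 ∂B.n1) * l.2,
      (B.a21 + ∫ z, z.1 ∂B.n2) * l.1 + (∫ z, z.2 ∂B.n2) * l.2) := rfl

theorem mPhi1_eq {l : ℝ × ℝ} (hl : 0 ≤ l) :
    mPhi1 B l = (B.meanMap l).1 - (B.alpha * l.1 ^ 2 + remainderIntegral B.n1 l) := by
  have hrem := integrable_expRemainder_pairing B.ae_n1_ge B.integrable_minSq_l1Norm_n1 hl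
  have hsplit : ∫ z, (Real.exp (-(l.1 * z.1 + l.2 * z.2)) - 1 + l.1 * z.1) ∂B.n1 =
      remainderIntegral B.n1 l - l.2 * ∫ z, z.2 ∂B.n1 := by
    rw [remainderIntegral, ← integral_const_mul,
      ← integral_sub hrem (B.integrable_snd_n1.const_mul l.2)]
    refine integral_congr_ae (.of_forall fun z => ?_)
    simp only [expRemainder, pairing]
    ring
  rw [mPhi1, hsplit, meanMap_apply]
  ring

theorem mPhi2_eq {l : ℝ × ℝ} (hl : 0 ≤ l) :
    mPhi2 B l = (B.meanMap l).2 - remainderIntegral B.n2 l := by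
  have hrem := integrable_expRemainder_pairing B.ae_n2_ge B.integrable_minSq_l1Norm_n2 hl
  have hfst := B.integrable_fst_n2.const_mul l.1
  have hsnd := B.integrable_snd_n2.const_mul l.2
  have hsplit : ∫ z, (1 - Real.exp (-(l.1 * z.1 + l.2 * z.2))) ∂B.n2 =
      l.1 * (∫ z, z.1 ∂B.n2) + l.2 * (∫ z, z.2 ∂B.n2) - remainderIntegral B.n2 l := by
    rw [remainderIntegral, ← integral_const_mul, ← integral_const_mul, ← integral_add hfst hsnd,
      ← integral_sub (by exact hfst.add hsnd) hrem]
    refine integral_congr_ae (.of_forall fun z => ?_)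
    simp only [expRemainder, pairing]
    ring
  rw [mPhi2, hsplit, meanMap_apply]
  ring

theorem continuousOn_phi : ContinuousOn B.phi (Ici 0) := by
  refine ContinuousOn.prodMk (ContinuousOn.congr ?_ fun l hl => B.mPhi1_eq hl)
    (ContinuousOn.congr ?_ fun l hl => B.mPhi2_eq hl)
  · have := continuousOn_remainderIntegral B.ae_n1_ge B.integrable_minSq_l1Norm_n1
    fun_prop
  · have := continuousOn_remainderIntegral B.ae_n2_ge B.integrable_minSq_l1Norm_n2
    fun_prop

theorem phi_zero : B.phi 0 = 0 := by simp [phi, mPhi1, mPhi2]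

theorem hasFDerivWithinAt_phi_zero : HasFDerivWithinAt B.phi B.meanMap (Ici 0) 0 := by
  have hmean := B.meanMap.hasFDerivWithinAt (s := Ici 0) (x := 0)
  have hsq : HasFDerivWithinAt (fun l : ℝ × ℝ => B.alpha * l.1 ^ 2) (0 : ℝ × ℝ →L[ℝ] ℝ)
      (Ici 0) 0 := by
    simpa using ((hasFDerivAt_fst (𝕜 := ℝ) (p := (0 : ℝ × ℝ))).pow 2).const_mul B.alpha
      |>.hasFDerivWithinAt
  have h₁ := hasFDerivWithinAt_remainderIntegral_zero B.ae_n1_ge B.integrable_minSq_l1Norm_n1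
  have h₂ := hasFDerivWithinAt_remainderIntegral_zero B.ae_n2_ge B.integrable_minSq_l1Norm_n2
  refine ((hmean.fst.sub (hsq.add h₁)).congr (fun l hl => B.mPhi1_eq hl) (B.mPhi1_eq le_rfl)).prodMk
    ((hmean.snd.sub h₂).congr (fun l hl => B.mPhi2_eq hl) (B.mPhi2_eq le_rfl)) |>.congr_fderiv ?_
  ext <;> simp

end BranchingMechanism

section Equations

variable {B : BranchingMechanism} {l : ℝ × ℝ} {v π : ℝ → ℝ × ℝ} {t : ℝ}

theorem SolvesCumulant.nonneg (hv : SolvesCumulant B l v) (ht : 0 ≤ t) : 0 ≤ v t :=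
  hv.2.1 t ht

theorem SolvesCumulant.apply_zero (hv : SolvesCumulant B l v) : v 0 = l := by
  have := hv.2.2 0 le_rfl
  simp only [intervalIntegral.integral_same, add_zero] at this
  exact Prod.ext this.1 this.2

theorem SolvesCumulant.hasDerivWithinAt (hv : SolvesCumulant B l v) (ht : 0 ≤ t) :
    HasDerivWithinAt v (B.phi (v t)) (Ici t) t := by
  have hcont : ContinuousOn (fun s => B.phi (v s)) (Ici 0) :=
    B.continuousOn_phi.comp hv.1 fun s hs => hv.nonneg hs
  exact (hasDerivWithinAt_Ici_of_eq_add_integral hcont.fst (fun s hs => (hv.2.2 s hs).1) ht).prodMk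
    (hasDerivWithinAt_Ici_of_eq_add_integral hcont.snd (fun s hs => (hv.2.2 s hs).2) ht)

theorem SolvesMoment.hasDerivWithinAt (hπ : SolvesMoment B l π) (ht : 0 ≤ t) :
    HasDerivWithinAt π (B.meanMap (π t)) (Ici 0) t := by
  obtain ⟨h₁, h₂⟩ := hπ.2.2 t ht
  refine (h₁.prodMk h₂).congr_deriv ?_
  rw [integral_add (B.integrable_fst_n2.mul_const _) (B.integrable_snd_n2.mul_const _),
    integral_mul_const, integral_mul_const, B.meanMap_apply]
  ext <;> simp <;> ring

theorem SolvesMoment.tendsto_inv_smul_cumulant (hπ : SolvesMoment B l π) {v : ℝ → ℝ → ℝ × ℝ}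
    (hv : ∀ θ > 0, SolvesCumulant B (θ • l) (v θ)) (ht : 0 ≤ t) :
    Tendsto (fun θ => θ⁻¹ • v θ t) (𝓝[>] 0) (𝓝 (π t)) :=
  tendsto_inv_smul_of_hasFDerivWithinAt_zero B.hasFDerivWithinAt_phi_zero B.phi_zero ht
    (fun _ hs => (hπ.hasDerivWithinAt hs.1).continuousWithinAt.mono Icc_subset_Ici_self)
    (fun _ hs => (hπ.hasDerivWithinAt hs.1).mono (Ici_subset_Ici.2 hs.1))
    (fun θ hθ => by rw [(hv θ hθ).apply_zero, hπ.1])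
    (fun θ hθ => (hv θ hθ).1.mono Icc_subset_Ici_self)
    (fun θ hθ _ hs => (hv θ hθ).nonneg hs.1)
    (fun θ hθ _ hs => (hv θ hθ).hasDerivWithinAt hs.1)

end Equations

section Coupling

variable {μ ν : Measure (ℝ × ℝ)} {Pc : Measure ((ℝ × ℝ) × (ℝ × ℝ))} {p : AddGroupSeminorm (ℝ × ℝ)}

theorem IsCoupling.swap (h : IsCoupling Pc μ ν) : IsCoupling (Pc.map Prod.swap) ν μ := by
  have := h.1
  refine ⟨Measure.isProbabilityMeasure_map (by fun_prop), ?_, ?_⟩ <;>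
    rw [Measure.map_map (by fun_prop) (by fun_prop)]
  exacts [h.2.2, h.2.1]

theorem IsCoupling.lintegral_le_add (h : IsCoupling Pc μ ν) (hp : Measurable p) :
    ∫⁻ u, ENNReal.ofReal (p u) ∂μ ≤
      ∫⁻ v, ENNReal.ofReal (p v) ∂ν + ∫⁻ w, ENNReal.ofReal (p (w.1 - w.2)) ∂Pc := by
  rw [← h.2.1, ← h.2.2, lintegral_map (by fun_prop) measurable_fst,
    lintegral_map (by fun_prop) measurable_snd, ← lintegral_add_left (by fun_prop)]
  refine lintegral_mono fun w => ?_
  rw [← ENNReal.ofReal_add (apply_nonneg p _) (apply_nonneg p _)]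
  exact ENNReal.ofReal_le_ofReal (by simpa using map_add_le_add p w.2 (w.1 - w.2))

theorem IsCoupling.ofReal_sub_le_lintegral (h : IsCoupling Pc μ ν) (hp : Measurable p) {a b : ℝ}
    (hb : 0 ≤ b) (hμ : ∫⁻ u, ENNReal.ofReal (p u) ∂μ = ENNReal.ofReal a)
    (hν : ∫⁻ v, ENNReal.ofReal (p v) ∂ν = ENNReal.ofReal b) :
    ENNReal.ofReal (a - b) ≤ ∫⁻ w, ENNReal.ofReal (p (w.1 - w.2)) ∂Pc := by
  rw [ENNReal.ofReal_sub a hb, tsub_le_iff_left, ← hμ, ← hν]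
  exact h.lintegral_le_add hp

theorem IsCoupling.ofReal_abs_sub_le_lintegral (h : IsCoupling Pc μ ν) (hp : Measurable p) {a b : ℝ}
    (ha : 0 ≤ a) (hb : 0 ≤ b) (hμ : ∫⁻ u, ENNReal.ofReal (p u) ∂μ = ENNReal.ofReal a)
    (hν : ∫⁻ v, ENNReal.ofReal (p v) ∂ν = ENNReal.ofReal b) :
    ENNReal.ofReal |a - b| ≤ ∫⁻ w, ENNReal.ofReal (p (w.1 - w.2)) ∂Pc := by
  rcases abs_choice (a - b) with hab | hab <;> rw [hab]
  · exact h.ofReal_sub_le_lintegral hp hb hμ hν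
  · have hswap := h.swap.ofReal_sub_le_lintegral hp ha hν hμ
    rw [lintegral_map (by fun_prop) measurable_swap] at hswap
    simpa only [neg_sub, Prod.fst_swap, Prod.snd_swap, map_sub_rev] using hswap

theorem exists_isCoupling_conv_lintegral_le (μ ρ σ : Measure (ℝ × ℝ)) [IsProbabilityMeasure μ]
    [IsProbabilityMeasure ρ] [IsProbabilityMeasure σ] (hp : Measurable p) :
    ∃ Pc, IsCoupling Pc (μ ∗ ρ) (μ ∗ σ) ∧
      ∫⁻ w, ENNReal.ofReal (p (w.1 - w.2)) ∂Pc ≤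
        ∫⁻ u, ENNReal.ofReal (p u) ∂ρ + ∫⁻ u, ENNReal.ofReal (p u) ∂σ := by
  let joint := μ.prod (ρ.prod σ)
  have hρ : MeasurePreserving (Prod.map id Prod.fst) joint (μ.prod ρ) :=
    (MeasurePreserving.id μ).prod measurePreserving_fst
  have hσ : MeasurePreserving (Prod.map id Prod.snd) joint (μ.prod σ) :=
    (MeasurePreserving.id μ).prod measurePreserving_snd
  let f (w : (ℝ × ℝ) × (ℝ × ℝ) × (ℝ × ℝ)) := (w.1 + w.2.1, w.1 + w.2.2)
  have hf : Measurable f := by fun_prop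
  refine ⟨joint.map f, ⟨Measure.isProbabilityMeasure_map hf.aemeasurable, ?_, ?_⟩, ?_⟩
  · rw [Measure.conv, ← hρ.map_eq, Measure.map_map (by fun_prop) hf,
      Measure.map_map (by fun_prop) (by fun_prop)]
    rfl
  · rw [Measure.conv, ← hσ.map_eq, Measure.map_map (by fun_prop) hf,
      Measure.map_map (by fun_prop) (by fun_prop)]
    rfl
  calc ∫⁻ w, ENNReal.ofReal (p (w.1 - w.2)) ∂joint.map f
      = ∫⁻ w, ENNReal.ofReal (p (w.2.1 - w.2.2)) ∂joint := by
        rw [lintegral_map (by fun_prop) hf]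
        simp only [f, add_sub_add_left_eq_sub]
    _ = ∫⁻ w, ENNReal.ofReal (p (w.1 - w.2)) ∂ρ.prod σ :=
        measurePreserving_snd.lintegral_comp (f := fun w : (ℝ × ℝ) × (ℝ × ℝ) =>
          ENNReal.ofReal (p (w.1 - w.2))) (by fun_prop)
    _ ≤ ∫⁻ w, (ENNReal.ofReal (p w.1) + ENNReal.ofReal (p w.2)) ∂ρ.prod σ := by
        refine lintegral_mono fun w => ?_
        rw [← ENNReal.ofReal_add (apply_nonneg p _) (apply_nonneg p _)]
        exact ENNReal.ofReal_le_ofReal (map_sub_le_add p w.1 w.2)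
    _ = ∫⁻ u, ENNReal.ofReal (p u) ∂ρ + ∫⁻ u, ENNReal.ofReal (p u) ∂σ := by
        rw [lintegral_add_left (by fun_prop),
          measurePreserving_fst.lintegral_comp (f := fun u => ENNReal.ofReal (p u)) (by fun_prop),
          measurePreserving_snd.lintegral_comp (f := fun u => ENNReal.ofReal (p u)) (by fun_prop)]

end Coupling

section Convolution

variable {μ ν : Measure (ℝ × ℝ)}

theorem ae_nonneg_conv (hμ : ∀ᵐ y ∂μ, 0 ≤ y) (hν : ∀ᵐ y ∂ν, 0 ≤ y) : ∀ᵐ y ∂(μ ∗ ν), 0 ≤ y := by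
  rw [Measure.conv, ae_map_iff (by fun_prop) measurableSet_Ici]
  filter_upwards [Measure.quasiMeasurePreserving_fst.ae hμ,
    Measure.quasiMeasurePreserving_snd.ae hν] with w h₁ h₂ using add_nonneg h₁ h₂

theorem integral_exp_neg_pairing_conv [SFinite μ] [SFinite ν] (l : ℝ × ℝ) :
    ∫ y, Real.exp (-pairing l y) ∂(μ ∗ ν) =
      (∫ y, Real.exp (-pairing l y) ∂μ) * ∫ y, Real.exp (-pairing l y) ∂ν := by
  rw [Measure.conv, integral_map (by fun_prop) (by fun_prop), ← integral_prod_mul]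
  simp only [pairing_add_right, neg_add, Real.exp_add]

end Convolution

section Mset

variable {x y : ℝ × ℝ}

theorem nonneg_of_mem_Mset (hx : x ∈ Mset) : 0 ≤ x := by
  obtain ⟨hx₁, k, hk⟩ := hx
  exact ⟨hx₁, hk ▸ k.cast_nonneg⟩

theorem add_mem_Mset (hx : x ∈ Mset) (hy : y ∈ Mset) : x + y ∈ Mset := by
  obtain ⟨hx₁, k, hk⟩ := hx
  obtain ⟨hy₁, m, hm⟩ := hy
  exact ⟨add_nonneg hx₁ hy₁, k + m, by simp [hk, hm]⟩

theorem inf_mem_Mset (hx : x ∈ Mset) (hy : y ∈ Mset) : x ⊓ y ∈ Mset := by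
  obtain ⟨hx₁, k, hk⟩ := hx
  obtain ⟨hy₁, m, hm⟩ := hy
  exact ⟨le_inf hx₁ hy₁, min k m, by simp [hk, hm]⟩

theorem posPart_sub_mem_Mset (hx : x ∈ Mset) (hy : y ∈ Mset) : (x - y)⁺ ∈ Mset := by
  obtain ⟨_, k, hk⟩ := hx
  obtain ⟨_, m, hm⟩ := hy
  refine ⟨le_sup_right, k - m, ?_⟩
  change max (x.2 - y.2) 0 = _
  rw [hk, hm]
  rcases le_total k m with h | h
  · rw [Nat.sub_eq_zero_of_le h, max_eq_right (by simpa using h), Nat.cast_zero]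
  · rw [Nat.cast_sub h, max_eq_left (by simpa using h)]

end Mset

namespace IsMSBTransition

variable {V : ℝ → ℝ × ℝ → ℝ × ℝ} {P : ℝ → ℝ × ℝ → Measure (ℝ × ℝ)} (hP : IsMSBTransition V P)
  {t : ℝ} (ht : 0 ≤ t) {x y : ℝ × ℝ} (hx : x ∈ Mset) (hy : y ∈ Mset)

include hP ht hx

theorem isProbabilityMeasure : IsProbabilityMeasure (P t x) := (hP t ht x hx).1

theorem ae_nonneg : ∀ᵐ u ∂P t x, 0 ≤ u := by
  filter_upwards [show ∀ᵐ u ∂P t x, u ∈ Mset from (hP t ht x hx).2.1] with u hu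
    using nonneg_of_mem_Mset hu

theorem integral_exp_neg_pairing {l : ℝ × ℝ} (hl : 0 ≤ l) :
    ∫ u, Real.exp (-pairing l u) ∂P t x = Real.exp (-pairing x (V t l)) :=
  (hP t ht x hx).2.2 l hl.1 hl.2

theorem lintegral_pairing {B : BranchingMechanism} {l : ℝ × ℝ} (hl : 0 ≤ l)
    (hV : ∀ θ > (0 : ℝ), SolvesCumulant B (θ • l) fun s => V s (θ • l)) {π : ℝ → ℝ × ℝ}
    (hπ : SolvesMoment B l π) :
    ∫⁻ u, ENNReal.ofReal (pairing l u) ∂P t x = ENNReal.ofReal (pairing x (π t)) := by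
  have := hP.isProbabilityMeasure ht hx
  refine lintegral_ofReal_eq_of_tendsto_laplace (by fun_prop) ?_ ?_
  · filter_upwards [hP.ae_nonneg ht hx] with u hu using pairing_nonneg hl hu
  have hlin : Tendsto (fun θ => pairing x (V t (θ • l)) / θ) (𝓝[>] 0) (𝓝 (pairing x (π t))) := by
    have hpair : Continuous (pairing x) := by fun_prop
    have hV_lim := hπ.tendsto_inv_smul_cumulant (v := fun θ s => V s (θ • l)) hV ht
    refine ((hpair.tendsto _).comp hV_lim).congr fun θ => ?_
    rw [Function.comp_apply, pairing_smul_right, inv_mul_eq_div]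
  refine (tendsto_one_sub_exp_neg_div hlin).congr' ?_
  filter_upwards [self_mem_nhdsWithin] with θ (hθ : 0 < θ)
  rw [← hP.integral_exp_neg_pairing ht hx (smul_nonneg hθ.le hl)]
  simp only [pairing_smul_left]

theorem lintegral_l1Norm {B : BranchingMechanism}
    (hV : ∀ θ > (0 : ℝ), SolvesCumulant B (θ • (1, 1)) fun s => V s (θ • (1, 1))) {π : ℝ → ℝ × ℝ}
    (hπ : SolvesMoment B (1, 1) π) :
    ∫⁻ u, ENNReal.ofReal (l1Norm u) ∂P t x = ENNReal.ofReal (pairing x (π t)) := by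
  rw [← hP.lintegral_pairing ht hx (by simp [Prod.le_def]) hV hπ]
  refine lintegral_congr_ae ?_
  filter_upwards [hP.ae_nonneg ht hx] with u hu
  rw [l1Norm_apply, abs_of_nonneg hu.1, abs_of_nonneg hu.2, pairing, one_mul, one_mul]

include hy

theorem conv_eq : P t x ∗ P t y = P t (x + y) := by
  have := hP.isProbabilityMeasure ht hx
  have := hP.isProbabilityMeasure ht hy
  have := hP.isProbabilityMeasure ht (add_mem_Mset hx hy)
  refine measure_eq_of_forall_integral_exp_neg_pairing_eq
    (ae_nonneg_conv (hP.ae_nonneg ht hx) (hP.ae_nonneg ht hy))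
    (hP.ae_nonneg ht (add_mem_Mset hx hy)) fun l hl => ?_
  rw [integral_exp_neg_pairing_conv, hP.integral_exp_neg_pairing ht hx hl,
    hP.integral_exp_neg_pairing ht hy hl,
    hP.integral_exp_neg_pairing ht (add_mem_Mset hx hy) hl, ← Real.exp_add, pairing_add_left,
    neg_add]

theorem exists_isCoupling_lintegral_le {p : AddGroupSeminorm (ℝ × ℝ)} (hp : Measurable p) :
    ∃ Pc, IsCoupling Pc (P t x) (P t y) ∧
      ∫⁻ w, ENNReal.ofReal (p (w.1 - w.2)) ∂Pc ≤
        ∫⁻ u, ENNReal.ofReal (p u) ∂P t (x - y)⁺ + ∫⁻ u, ENNReal.ofReal (p u) ∂P t (y - x)⁺ := by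
  have hinf := inf_mem_Mset hx hy
  have hxy := posPart_sub_mem_Mset hx hy
  have hyx := posPart_sub_mem_Mset hy hx
  have := hP.isProbabilityMeasure ht hinf
  have := hP.isProbabilityMeasure ht hxy
  have := hP.isProbabilityMeasure ht hyx
  have hx_eq : x ⊓ y + (x - y)⁺ = x := by rw [inf_eq_sub_posPart_sub, sub_add_cancel]
  have hy_eq : x ⊓ y + (y - x)⁺ = y := by rw [inf_comm, inf_eq_sub_posPart_sub, sub_add_cancel]
  have hcoupling :=
    exists_isCoupling_conv_lintegral_le (P t (x ⊓ y)) (P t (x - y)⁺) (P t (y - x)⁺) hp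
  rwa [hP.conv_eq ht hinf hxy, hP.conv_eq ht hinf hyx, hx_eq, hy_eq] at hcoupling

end IsMSBTransition

/-- Coupling bounds for the `L¹`-Wasserstein distance between
`P_t(x,·)` and `P_t(y,·)`: every coupling has cost at least
`|(x₁-y₁)π₁(t,1) + (x₂-y₂)π₂(t,1)|`, and some coupling has cost at most
`|x₁-y₁|π₁(t,1) + |x₂-y₂|π₂(t,1)`. -/
theorem wasserstein_bounds_MSB (B : BranchingMechanism)
    (V : ℝ → (ℝ × ℝ) → ℝ × ℝ)
    (hV : ∀ l : ℝ × ℝ, 0 ≤ l.1 → 0 ≤ l.2 → SolvesCumulant B l (fun t => V t l))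
    (P : ℝ → (ℝ × ℝ) → Measure (ℝ × ℝ))
    (hP : IsMSBTransition V P)
    (π : ℝ → ℝ × ℝ) (hπ : SolvesMoment B (1, 1) π) :
    ∀ t : ℝ, 0 ≤ t → ∀ x ∈ Mset, ∀ y ∈ Mset,
      -- (i) lower bound for every coupling
      (∀ Pc : Measure ((ℝ × ℝ) × (ℝ × ℝ)), IsCoupling Pc (P t x) (P t y) →
        ENNReal.ofReal |(x.1 - y.1) * (π t).1 + (x.2 - y.2) * (π t).2|
          ≤ ∫⁻ w, ENNReal.ofReal (|w.1.1 - w.2.1| + |w.1.2 - w.2.2|) ∂Pc) ∧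
      -- (ii) upper bound for some coupling
      (∃ Pc : Measure ((ℝ × ℝ) × (ℝ × ℝ)), IsCoupling Pc (P t x) (P t y) ∧
        ∫⁻ w, ENNReal.ofReal (|w.1.1 - w.2.1| + |w.1.2 - w.2.2|) ∂Pc
          ≤ ENNReal.ofReal (|x.1 - y.1| * (π t).1 + |x.2 - y.2| * (π t).2)) := by
  intro t ht x hx y hy
  have hV' (θ : ℝ) (hθ : θ > 0) : SolvesCumulant B (θ • (1, 1)) fun s => V s (θ • (1, 1)) :=
    hV _ (by simp [hθ.le]) (by simp [hθ.le])
  have hmoment {z : ℝ × ℝ} (hz : z ∈ Mset) :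
      ∫⁻ u, ENNReal.ofReal (l1Norm u) ∂P t z = ENNReal.ofReal (pairing z (π t)) :=
    hP.lintegral_l1Norm ht hz hV' hπ
  have hnonneg {z : ℝ × ℝ} (hz : z ∈ Mset) : 0 ≤ pairing z (π t) :=
    pairing_nonneg (nonneg_of_mem_Mset hz) (hπ.2.1 t ht)
  refine ⟨fun Pc hPc => ?_, ?_⟩
  · rw [show (x.1 - y.1) * (π t).1 + (x.2 - y.2) * (π t).2 = pairing x (π t) - pairing y (π t) by
      simp only [pairing]; ring]
    exact hPc.ofReal_abs_sub_le_lintegral (p := l1Norm) (by fun_prop) (hnonneg hx) (hnonneg hy)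
      (hmoment hx) (hmoment hy)
  · obtain ⟨Pc, hPc, hcost⟩ := hP.exists_isCoupling_lintegral_le ht hx hy (p := l1Norm)
      (by fun_prop)
    have hxy := posPart_sub_mem_Mset hx hy
    have hyx := posPart_sub_mem_Mset hy hx
    refine ⟨Pc, hPc, hcost.trans_eq ?_⟩
    rw [hmoment hxy, hmoment hyx, ← ENNReal.ofReal_add (hnonneg hxy) (hnonneg hyx),
      pairing_posPart_sub_add]
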